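/- Let (G,x,y) encode a reflexive regular map that is simple, satisfies 2q² > |G| (density exceeding 1/2), and has p = 3. If J < q, then no neighbour of a vertex v lies in V_v, q is even, and 3q² ≤ 2|G| (the density is at most 2/3). If J = q, then q is odd. -/

import Mathlib

namespace RegularMap

variable {G : Type*} [Group G]

/-- The vertex set of the map: left cosets of the cyclic subgroup generated by `y`. -/
abbrev Vertex (y : G) : Type _ := G ⧸ Subgroup.zpowers y

/-- The rotation about the vertex `v = g⟨y⟩`, namely `g * y * g⁻¹`. -/
def rot (y : G) (v : Vertex y) : G :=
  Quotient.liftOn' v (fun g => g * y * g⁻¹) (by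
    intro a b h
    obtain ⟨k, hk⟩ := QuotientGroup.leftRel_apply.mp h
    have hk' : y ^ k = a⁻¹ * b := hk
    have hb : b = a * y ^ k := by rw [hk']; group
    subst hb
    group)

/-- Two vertices are adjacent iff they are distinct and form the endpoint pair of
some edge `g⟨x*y⟩`, whose endpoints are `g⟨y⟩` and `g*x*y⟨y⟩`. -/
def Adj (x y : G) (v w : Vertex y) : Prop :=
  v ≠ w ∧ ∃ g : G,
    ({v, w} : Set (Vertex y)) = {QuotientGroup.mk g, QuotientGroup.mk (g * x * y)}

/-- The map is simple: no edge has equal endpoints, and distinct edges (left cosets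
of `⟨x*y⟩`) have distinct endpoint pairs. -/
def IsSimple (x y : G) : Prop :=
  (∀ g : G, (QuotientGroup.mk g : Vertex y) ≠ QuotientGroup.mk (g * x * y)) ∧
  ∀ g h : G,
    ({QuotientGroup.mk g, QuotientGroup.mk (g * x * y)} : Set (Vertex y)) =
      {QuotientGroup.mk h, QuotientGroup.mk (h * x * y)} →
    (QuotientGroup.mk g : G ⧸ Subgroup.zpowers (x * y)) = QuotientGroup.mk h

/-- The map is reflexive: some group automorphism inverts both `x` and `y`. -/
def IsReflexive (x y : G) : Prop :=
  ∃ σ : G ≃* G, σ x = x⁻¹ ∧ σ y = y⁻¹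

/-- An automorphism of the map (given a reflection σ): either orientation preserving,
`g⟨y⟩ ↦ a*g⟨y⟩`, or orientation reversing, `g⟨y⟩ ↦ a*σ(g)⟨y⟩`. -/
def IsMapAut (y : G) (σ : G ≃* G) (φ : Vertex y → Vertex y) : Prop :=
  (∃ a : G, ∀ g : G, φ (QuotientGroup.mk g) = QuotientGroup.mk (a * g)) ∨
  (∃ a : G, ∀ g : G, φ (QuotientGroup.mk g) = QuotientGroup.mk (a * σ g))

/-- `v'` is a diagonal neighbour of `v`: `v' = S_w² • v` for some vertex `w` adjacent to `v`. -/
def DiagNeighbor (x y : G) (v v' : Vertex y) : Prop :=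
  ∃ w : Vertex y, Adj x y v w ∧ v' = rot y w ^ 2 • v

/-- Diagonal alignment: the reflexive-transitive closure of the diagonal-neighbour relation. -/
def Aligned (x y : G) : Vertex y → Vertex y → Prop :=
  Relation.ReflTransGen (DiagNeighbor x y)

/-- The primitive period `J`: the least `j ≥ 1` such that `S_v^j` fixes every vertex
diagonally aligned with `v` (this is independent of `v`). -/
noncomputable def primPeriod (x y : G) : ℕ :=
  sInf {j : ℕ | 1 ≤ j ∧ ∀ v v' : Vertex y, Aligned x y v v' → rot y v ^ j • v' = v'}

/-- The even period `T = lcm(J, 2)`. -/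
noncomputable def evenPeriod (x y : G) : ℕ := Nat.lcm (primPeriod x y) 2

/-- Relators of the tetrahedral group ⟨X,Y ∣ X³, Y³, (XY)²⟩. -/
def tetRels : Set (FreeGroup (Fin 2)) :=
  {FreeGroup.of 0 ^ 3, FreeGroup.of 1 ^ 3, (FreeGroup.of 0 * FreeGroup.of 1) ^ 2}

/-- Relators of the Fermat group ⟨X,Y ∣ X³, Y^(2n), (XY)², [X,Y]³⟩. -/
def fermatRels (n : ℕ) : Set (FreeGroup (Fin 2)) :=
  {FreeGroup.of 0 ^ 3, FreeGroup.of 1 ^ (2 * n), (FreeGroup.of 0 * FreeGroup.of 1) ^ 2,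
    (FreeGroup.of 0 * FreeGroup.of 1 * (FreeGroup.of 0)⁻¹ * (FreeGroup.of 1)⁻¹) ^ 3}

/-- `(G,x,y)` is the tetrahedral map: the canonical homomorphism from the presented
group ⟨X,Y ∣ X³, Y³, (XY)²⟩ sending X to x and Y to y is an isomorphism. -/
def IsTet (G : Type*) [Group G] (x y : G) : Prop :=
  ∃ e : PresentedGroup tetRels ≃* G,
    e (PresentedGroup.of 0) = x ∧ e (PresentedGroup.of 1) = y

/-- `(G,x,y)` is the Fermat map `Fer(n)`: the canonical homomorphism from the Fermat
group `G_n` sending X to x and Y to y is an isomorphism. -/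
def IsFermat (n : ℕ) (G : Type*) [Group G] (x y : G) : Prop :=
  ∃ e : PresentedGroup (fermatRels n) ≃* G,
    e (PresentedGroup.of 0) = x ∧ e (PresentedGroup.of 1) = y

lemma eq_self_inv {x y : G} (hxy : (x * y) ^ 2 = 1) : x * y = y⁻¹ * x⁻¹ := by
  rw [pow_two] at hxy
  rw [← mul_inv_rev]; exact eq_inv_of_mul_eq_one_left hxy

lemma yx_eq {x y : G} (hxy : (x * y) ^ 2 = 1) : y * x = x⁻¹ * y⁻¹ := by
  have h := eq_self_inv hxy
  have h2 : x⁻¹ * (x * y) * x = x⁻¹ * (y⁻¹ * x⁻¹) * x := by rw [h]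
  simpa [mul_assoc] using h2

lemma xinv_eq {x y : G} (hxy : (x * y) ^ 2 = 1) : x⁻¹ = y * x * y := by
  rw [mul_assoc, eq_self_inv hxy]; group

lemma xx_eq {x : G} (hp : x ^ 3 = 1) : x * x = x⁻¹ := by
  rw [eq_inv_iff_mul_eq_one, ← hp]; simp [pow_succ]

lemma xixi_eq {x : G} (hp : x ^ 3 = 1) : x⁻¹ * x⁻¹ = x := by
  rw [← mul_inv_rev, xx_eq hp, inv_inv]

/-- symmetric form of the diagonal element -/
lemma e_eq {x y : G} (hxy : (x * y) ^ 2 = 1) (hp : x ^ 3 = 1) :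
    x * y⁻¹ * x = x⁻¹ * y * x⁻¹ := by
  have h1 : y⁻¹ = x * y * x := by
    rw [mul_assoc, yx_eq hxy]; group
  calc x * y⁻¹ * x = (x * x) * y * (x * x) := by rw [h1]; group
    _ = _ := by rw [xx_eq hp]

lemma d_eq {x y : G} (hxy : (x * y) ^ 2 = 1) (hp : x ^ 3 = 1) :
    x * y ^ 2 * x⁻¹ = y⁻¹ * (x * y⁻¹ * x) := by
  rw [e_eq hxy hp, pow_two, ← mul_assoc, eq_self_inv hxy]; group

/-- simplicity: `y^k` fixing the neighbour `x⟨y⟩` is trivial -/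
lemma simple_key {x y : G} (hxy : (x * y) ^ 2 = 1) (hs : IsSimple x y) (k : ℤ)
    (h : x⁻¹ * y ^ k * x ∈ Subgroup.zpowers y) : y ^ k = 1 := by
  have hyk : y ^ k ∈ Subgroup.zpowers y := ⟨k, rfl⟩
  have hy : y ∈ Subgroup.zpowers y := Subgroup.mem_zpowers y
  have h1 : (QuotientGroup.mk (1 : G) : Vertex y) = QuotientGroup.mk (y ^ k) := by
    rw [QuotientGroup.eq]; simpa using hyk
  have h2 : (QuotientGroup.mk (1 * x * y : G) : Vertex y) = QuotientGroup.mk (y ^ k * x * y) := by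
    rw [QuotientGroup.eq]
    have : (1 * x * y)⁻¹ * (y ^ k * x * y) = y⁻¹ * (x⁻¹ * y ^ k * x) * y := by group
    rw [this]
    exact mul_mem (mul_mem (inv_mem hy) h) hy
  have h3 := hs.2 1 (y ^ k) (by rw [h1, h2])
  rw [QuotientGroup.eq] at h3
  obtain ⟨m, hm⟩ := h3
  have hm : (x * y) ^ m = y ^ k := by simpa using hm
  rcases Int.even_or_odd' m with ⟨c, hc | hc⟩
  · rw [← hm, hc, zpow_mul]
    have : (x * y) ^ (2 : ℤ) = 1 := by exact_mod_cast hxy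
    rw [this, one_zpow]
  · exfalso
    have : (x * y) ^ (2 : ℤ) = 1 := by exact_mod_cast hxy
    rw [hc, zpow_add, zpow_mul, this, one_zpow, one_mul, zpow_one] at hm
    apply hs.1 1
    rw [QuotientGroup.eq]
    simp only [inv_one, one_mul]
    rw [hm]; exact hyk

/-- size of double cosets -/
lemma double_inj {y g : G} (h : ∀ k : ℤ, g⁻¹ * y ^ k * g ∈ Subgroup.zpowers y → y ^ k = 1) :
    Function.Injective
      (fun p : Subgroup.zpowers y × Subgroup.zpowers y => (p.1 : G) * g * (p.2 : G)) := by
  rintro ⟨⟨a, i, rfl⟩, ⟨b, j, rfl⟩⟩ ⟨⟨a', i', rfl⟩, ⟨b', j', rfl⟩⟩ hh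
  simp only at hh
  have h1 : g⁻¹ * y ^ (i - i') * g = y ^ (j' - j) := by
    have : g⁻¹ * y ^ (i - i') * g = g⁻¹ * y ^ (-i') * (y ^ i * g * y ^ j) * y ^ (-j) := by group
    rw [this, hh]; group
  have h2 := h (i - i') (by rw [h1]; exact ⟨_, rfl⟩)
  have h3 : y ^ i = y ^ i' := by
    rw [zpow_sub] at h2; exact mul_inv_eq_one.mp h2
  have h4 : y ^ j = y ^ j' := by
    rw [h3] at hh; exact mul_left_cancel hh
  simp [h3, h4]

lemma not_e {x y : G} (hxy : (x * y) ^ 2 = 1) (hp : x ^ 3 = 1) (hs : IsSimple x y)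
    (hr : IsReflexive x y) (hev : Even (orderOf y)) (k m : ℤ) :
    x * y⁻¹ * x ≠ y ^ k * x * y ^ m := by
  intro h
  obtain ⟨σ, hx, hy⟩ := hr
  have h1 := congrArg σ h
  simp only [map_mul, map_inv, map_zpow, hx, hy, inv_inv, inv_zpow] at h1
  rw [← e_eq hxy hp, h] at h1
  have h2 : x⁻¹ * y ^ (2 * k - 1) * x = y ^ (1 - 2 * m) := by
    have e1 : x⁻¹ * y ^ (2 * k - 1) * x
        = x⁻¹ * y ^ (k - 1) * (y ^ k * x * y ^ m) * y ^ (-m) := by group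
    rw [e1, h1, xinv_eq hxy]
    have e2 : y * x * y * y ^ (k - 1) * ((y ^ k)⁻¹ * (y * x * y) * (y ^ m)⁻¹) * y ^ (-m)
       = y * (x * y) ^ 2 * y ^ (-2 * m) := by rw [pow_two]; group
    rw [e2, hxy]; group
  have h3 := simple_key hxy hs (2 * k - 1) (by rw [h2]; exact ⟨_, rfl⟩)
  have h4 := orderOf_dvd_iff_zpow_eq_one.mpr h3
  obtain ⟨c, hc⟩ := hev
  obtain ⟨d, hd⟩ := h4
  rw [hc] at hd
  push_cast at hd
  have : 2 * k - 1 = 2 * (c * d) := by rw [hd]; ring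
  omega

/-- the even case: a nontrivial power of `y` whose cyclic group is normalised by `y` and `e` -/
lemma even_case [Finite G] {x y : G} (hxy : (x * y) ^ 2 = 1) (hp : x ^ 3 = 1) (hs : IsSimple x y)
    (hr : IsReflexive x y) (hden : 2 * orderOf y ^ 2 > Nat.card G) (hev : Even (orderOf y)) :
    ∃ j : ℕ, 1 ≤ j ∧ j < orderOf y ∧ ∀ h ∈ Subgroup.closure {y, x * y⁻¹ * x},
      h⁻¹ * y ^ j * h ∈ Subgroup.zpowers y := by
  by_cases hinj : ∀ k : ℤ, (x * y⁻¹ * x)⁻¹ * y ^ k * (x * y⁻¹ * x) ∈ Subgroup.zpowers y → y ^ k = 1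
  · exfalso
    have i1 := double_inj hinj
    have i2 := double_inj (g := x) (fun k => simple_key hxy hs k)
    have := Nat.card_le_card_of_injective _ (i1.sumElim i2 (by
      rintro ⟨⟨a, i, rfl⟩, ⟨b, j, rfl⟩⟩ ⟨⟨a', i', rfl⟩, ⟨b', j', rfl⟩⟩ hh
      simp only at hh
      apply not_e hxy hp hs hr hev (i' - i) (j' - j)
      have : x * y⁻¹ * x = y ^ (-i) * (y ^ i * (x * y⁻¹ * x) * y ^ j) * y ^ (-j) := by group
      rw [this, hh]; group))
    simp only [Nat.card_sum, Nat.card_prod, Nat.card_zpowers] at this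
    nlinarith
  · push Not at hinj
    obtain ⟨k, hk, hk1⟩ := hinj
    obtain ⟨j, hjlt, hj⟩ : ∃ j : ℕ, j < orderOf y ∧ y ^ j = y ^ k := by
      have : y ^ k ∈ Subgroup.zpowers y := ⟨k, rfl⟩
      classical
      have := (isOfFinOrder_of_finite y).mem_zpowers_iff_mem_range_orderOf.mp this
      simpa using this
    rw [← hj] at hk hk1
    have hj0 : 0 < j := by
      rcases Nat.eq_zero_or_pos j with h | h
      · subst h; simp at hk1
      · exact h
    have hdj := Nat.gcd_le_left (orderOf y) hj0
    have hd0 : 0 < Nat.gcd j (orderOf y) := Nat.gcd_pos_of_pos_left _ hj0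
    have hdq : Nat.gcd j (orderOf y) ∣ orderOf y := Nat.gcd_dvd_right _ _
    have hyd : y ^ Nat.gcd j (orderOf y) = (y ^ j) ^ (Nat.gcdA j (orderOf y)) := by
      rw [← zpow_natCast, Nat.gcd_eq_gcd_ab, zpow_add, zpow_mul, zpow_mul, zpow_natCast,
        zpow_natCast, pow_orderOf_eq_one, one_zpow, mul_one]
    generalize hd : Nat.gcd j (orderOf y) = d at *
    have hed : (x * y⁻¹ * x)⁻¹ * y ^ d * (x * y⁻¹ * x) ∈ Subgroup.zpowers y := by
      have h1 := zpow_mem hk (Nat.gcdA j (orderOf y))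
      have h2 : (x * y⁻¹ * x)⁻¹ * y ^ d * (x * y⁻¹ * x) =
          ((x * y⁻¹ * x)⁻¹ * y ^ j * (x * y⁻¹ * x)) ^ (Nat.gcdA j (orderOf y)) := by
        have h3 := conj_zpow (i := Nat.gcdA j (orderOf y)) (a := (x * y⁻¹ * x)⁻¹) (b := y ^ j)
        rw [inv_inv] at h3
        rw [h3, hyd]
      rw [h2]; exact h1
    have key : ∀ h : G, h⁻¹ * y ^ d * h ∈ Subgroup.zpowers y →
        h⁻¹ * y ^ d * h ∈ Subgroup.zpowers (y ^ d) := by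
      intro h hh
      obtain ⟨m, hm⟩ := hh
      simp only at hm
      obtain ⟨c, hc⟩ := hdq
      have h1 : (y ^ m) ^ c = 1 := by
        have h3 := conj_pow (i := c) (a := h⁻¹) (b := y ^ d)
        rw [inv_inv] at h3
        rw [hm, h3, ← pow_mul, ← hc, pow_orderOf_eq_one]; simp
      rw [← zpow_natCast, ← zpow_mul] at h1
      have h2 := orderOf_dvd_iff_zpow_eq_one.mpr h1
      have hc0 : (c : ℤ) ≠ 0 := by
        rintro h0
        have : c = 0 := by exact_mod_cast h0
        rw [this, mul_zero] at hc
        exact (orderOf_pos y).ne' hc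
      rw [hc] at h2
      push_cast at h2
      obtain ⟨f, hf⟩ := Int.dvd_of_mul_dvd_mul_right hc0 h2
      refine ⟨f, ?_⟩
      simp only
      rw [← hm, hf, zpow_mul, zpow_natCast]
    refine ⟨d, hd0, by omega, ?_⟩
    let M : Submonoid G :=
      { carrier := {h | h⁻¹ * y ^ d * h ∈ Subgroup.zpowers (y ^ d)}
        one_mem' := by simp
        mul_mem' := by
          rintro a b ⟨i, hi⟩ ⟨l, hl⟩
          simp only at hi hl
          have h3 := conj_zpow (i := i) (a := b⁻¹) (b := y ^ d)
          rw [inv_inv, ← hl] at h3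
          refine ⟨l * i, ?_⟩
          simp only
          rw [zpow_mul, h3, hi]; group }
    have hle : Subgroup.zpowers (y ^ d) ≤ Subgroup.zpowers y := by
      rw [Subgroup.zpowers_le]; exact ⟨d, by simp⟩
    intro h hh
    apply hle
    change h ∈ M
    induction hh using Subgroup.closure_induction with
    | mem a ha =>
      rcases ha with rfl | rfl
      · exact ⟨1, by simp only; rw [zpow_one]; group⟩
      · exact key _ hed
    | one => exact one_mem _
    | mul a b _ _ iha ihb => exact mul_mem iha ihb
    | inv a _ iha =>
      have : a⁻¹ ∈ Submonoid.powers a := by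
        rw [mem_powers_iff_mem_zpowers]; exact inv_mem (Subgroup.mem_zpowers a)
      obtain ⟨n, hn⟩ := this
      rw [← hn]; exact pow_mem iha n

lemma mem_or [Finite G] {x y : G} (hgen : Subgroup.closure {x, y} = ⊤) (hxy : (x * y) ^ 2 = 1)
    (hp : x ^ 3 = 1) (H : Subgroup G) (hy : y ∈ H) (he : x * y⁻¹ * x ∈ H) (g : G) :
    g ∈ H ∨ x⁻¹ * g ∈ H ∨ x * g ∈ H := by
  have hg : g ∈ Subgroup.closure {x, y} := by rw [hgen]; trivial
  induction hg using Subgroup.closure_induction_left with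
  | one => left; exact one_mem _
  | mul_left a ha b hb ih =>
    rcases ha with rfl | rfl
    · rcases ih with h | h | h
      · right; left; simpa using h
      · right; right; rwa [← mul_assoc, xx_eq hp]
      · left; exact h
    · rcases ih with h | h | h
      · left; exact mul_mem hy h
      · right; right
        rw [← mul_assoc, eq_self_inv hxy, mul_assoc]; exact mul_mem (inv_mem hy) h
      · right; left
        rw [e_eq hxy hp] at he
        have := mul_mem he h
        simpa [mul_assoc] using this
  | inv_mul_cancel a ha b hb ih =>
    rcases ha with rfl | rfl
    · rcases ih with h | h | h
      · right; right; simpa using h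
      · left; exact h
      · right; left; rwa [← mul_assoc, xixi_eq hp]
    · rcases ih with h | h | h
      · left; exact mul_mem (inv_mem hy) h
      · right; right
        have := mul_mem he h
        simpa [mul_assoc] using this
      · right; left
        rw [← mul_assoc, ← yx_eq hxy, mul_assoc]; exact mul_mem hy h

lemma card_le [Finite G] {x y : G} (hgen : Subgroup.closure {x, y} = ⊤) (hxy : (x * y) ^ 2 = 1)
    (hp : x ^ 3 = 1) (H : Subgroup G) (hy : y ∈ H) (he : x * y⁻¹ * x ∈ H) :
    Nat.card G ≤ 3 * Nat.card H := by
  have : Function.Surjective (Sum.elim (fun h : H => (h : G))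
      (Sum.elim (fun h : H => x * (h : G)) (fun h : H => x⁻¹ * (h : G)))) := by
    intro g
    rcases mem_or hgen hxy hp H hy he g with h | h | h
    · exact ⟨.inl ⟨_, h⟩, rfl⟩
    · exact ⟨.inr (.inl ⟨_, h⟩), by simp⟩
    · exact ⟨.inr (.inr ⟨_, h⟩), by simp⟩
  have := Nat.card_le_card_of_surjective _ this
  simp only [Nat.card_sum] at this
  omega

lemma adj_form {x y : G} (hxy : (x * y) ^ 2 = 1) {g : G} {w : Vertex y}
    (h : Adj x y (QuotientGroup.mk g) w) : ∃ k : ℤ, w = QuotientGroup.mk (g * y ^ k * x) := by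
  have hy : ∀ a : G, (QuotientGroup.mk (a * y) : Vertex y) = QuotientGroup.mk a := by
    intro a; rw [QuotientGroup.eq]; simp
  obtain ⟨hne, u, hu⟩ := h
  have hz : u * x * y * x * y = u := by
    have : u * x * y * x * y = u * (x * y) ^ 2 := by rw [pow_two]; group
    rw [this, hxy, mul_one]
  rcases Set.pair_eq_pair_iff.mp hu with ⟨h1, h2⟩ | ⟨h1, h2⟩
  · obtain ⟨k, hk⟩ := QuotientGroup.eq.mp h1
    simp only at hk
    refine ⟨k, ?_⟩
    rw [h2, hy, hk]; simp
  · obtain ⟨k, hk⟩ := QuotientGroup.eq.mp h1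
    simp only at hk
    refine ⟨k, ?_⟩
    rw [h2, hk]
    conv_lhs => rw [← hz, hy]
    congr 1; group

lemma rot_mk (y g : G) : rot y (QuotientGroup.mk g) = g * y * g⁻¹ := rfl

lemma aligned_form {x y : G} (hxy : (x * y) ^ 2 = 1) (hp : x ^ 3 = 1) {g : G} {v : Vertex y}
    (h : Aligned x y (QuotientGroup.mk g) v) :
    ∃ a ∈ Subgroup.closure {y, x * y⁻¹ * x}, v = QuotientGroup.mk (g * a) := by
  have hy : y ∈ Subgroup.closure {y, x * y⁻¹ * x} := Subgroup.subset_closure (by simp)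
  have he : x * y⁻¹ * x ∈ Subgroup.closure {y, x * y⁻¹ * x} := Subgroup.subset_closure (by simp)
  induction h with
  | refl => exact ⟨1, one_mem _, by simp⟩
  | tail _ hd ih =>
    obtain ⟨a, ha, rfl⟩ := ih
    obtain ⟨w, hw, rfl⟩ := hd
    obtain ⟨k, rfl⟩ := adj_form hxy hw
    refine ⟨a * y ^ k * (y⁻¹ * (x * y⁻¹ * x)) * y ^ (-k), ?_, ?_⟩
    · exact mul_mem (mul_mem (mul_mem ha (zpow_mem hy k)) (mul_mem (inv_mem hy) he)) (zpow_mem hy _)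
    · rw [rot_mk, ← d_eq hxy hp, MulAction.Quotient.smul_mk, conj_pow]
      congr 1
      simp only [smul_eq_mul]
      group

lemma odd_case [Finite G] {x y : G} (hxy : (x * y) ^ 2 = 1) (hp : x ^ 3 = 1) (hs : IsSimple x y)
    (hodd : Odd (orderOf y)) :
    ∃ v w : Vertex y, Adj x y v w ∧ Aligned x y v w := by
  have hal : ∀ m : ℕ, Aligned x y (QuotientGroup.mk x) (QuotientGroup.mk (y ^ (2 * m) * x)) := by
    intro m
    induction m with
    | zero => simp only [mul_zero, pow_zero, one_mul]; exact Relation.ReflTransGen.refl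
    | succ m ih =>
      refine ih.tail ⟨QuotientGroup.mk 1, ⟨?_, y ^ (2 * m), ?_⟩, ?_⟩
      · intro h
        apply hs.1 (y ^ (2 * m))
        rw [QuotientGroup.eq] at h ⊢
        have h2 := mul_mem (mul_mem (inv_mem (mul_mem h
          (pow_mem (Subgroup.mem_zpowers y) (2 * m)))) (one_mem _)) (Subgroup.mem_zpowers y)
        simpa [mul_assoc] using h2
      · rw [Set.pair_comm]
        congr 1
        · rw [QuotientGroup.eq]; simp
        · congr 1
          rw [QuotientGroup.eq]; simp [mul_assoc]
      · rw [rot_mk, MulAction.Quotient.smul_mk]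
        congr 1
        simp only [smul_eq_mul]
        group
  obtain ⟨c, hc⟩ := hodd
  refine ⟨QuotientGroup.mk x, QuotientGroup.mk (y ^ (2 * (c + 1)) * x), ?_, hal _⟩
  have h1 : y ^ (2 * (c + 1)) = y := by
    have : 2 * (c + 1) = orderOf y + 1 := by omega
    rw [this, pow_succ, pow_orderOf_eq_one, one_mul]
  have h2 : (QuotientGroup.mk (y ^ (2 * (c + 1)) * x) : Vertex y) = QuotientGroup.mk (x * x * y) := by
    rw [h1, QuotientGroup.eq, yx_eq hxy, xx_eq hp]
    simp only [mul_inv_rev, inv_inv, mul_assoc, mul_inv_cancel_left]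
    exact mul_mem (Subgroup.mem_zpowers y) (Subgroup.mem_zpowers y)
  rw [h2]
  exact ⟨hs.1 x, x, rfl⟩

/-- If `J < q` then no neighbour of a vertex lies in its alignment class, `q` is even
and the density is at most 2/3; if `J = q` then `q` is odd. -/
theorem primPeriod_parity
    (G : Type*) [Group G] [Finite G] (x y : G)
    (hgen : Subgroup.closure {x, y} = ⊤) (hxy : (x * y) ^ 2 = 1)
    (hrefl : IsReflexive x y) (hsimple : IsSimple x y)
    (hden : 2 * orderOf y ^ 2 > Nat.card G) (hp : orderOf x = 3) :
    (primPeriod x y < orderOf y →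
      (∀ v w : Vertex y, Adj x y v w → ¬ Aligned x y v w) ∧
      Even (orderOf y) ∧ 3 * orderOf y ^ 2 ≤ 2 * Nat.card G) ∧
    (primPeriod x y = orderOf y → Odd (orderOf y)) := by
  have hp3 : x ^ 3 = 1 := by rw [← hp]; exact pow_orderOf_eq_one x
  have hEven : Even (orderOf y) → primPeriod x y < orderOf y := by
    intro hev
    obtain ⟨j, hj1, hjq, hj⟩ := even_case hxy hp3 hsimple hrefl hden hev
    refine lt_of_le_of_lt (Nat.sInf_le ⟨hj1, ?_⟩) hjq
    intro v v' hv
    induction v using QuotientGroup.induction_on with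
    | H g =>
      obtain ⟨a, ha, rfl⟩ := aligned_form hxy hp3 hv
      rw [rot_mk, MulAction.Quotient.smul_mk, QuotientGroup.eq]
      have h1 := inv_mem (hj a ha)
      have h2 : ((g * y * g⁻¹) ^ j • (g * a))⁻¹ * (g * a) = (a⁻¹ * y ^ j * a)⁻¹ := by
        rw [conj_pow, smul_eq_mul]; group
      rw [h2]; exact h1
  refine ⟨fun hJ => ?_, fun hJ => ?_⟩
  · have hmem : primPeriod x y ∈ {j : ℕ | 1 ≤ j ∧ ∀ v v' : Vertex y, Aligned x y v v' →
        rot y v ^ j • v' = v'} := by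
      apply Nat.sInf_mem
      refine ⟨orderOf y, orderOf_pos y, ?_⟩
      intro v v' _
      induction v using QuotientGroup.induction_on with
      | H g => rw [rot_mk, conj_pow, pow_orderOf_eq_one]; simp
    have hA : ∀ v w : Vertex y, Adj x y v w → ¬ Aligned x y v w := by
      intro v w hvw hal
      have h1 := hmem.2 v w hal
      induction v using QuotientGroup.induction_on with
      | H g =>
        obtain ⟨k, rfl⟩ := adj_form hxy hvw
        rw [rot_mk, MulAction.Quotient.smul_mk, conj_pow, smul_eq_mul] at h1
        have h2 := QuotientGroup.eq.mp h1.symm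
        have h3 := simple_key hxy hsimple (primPeriod x y) (by
          convert h2 using 1
          group)
        rw [zpow_natCast] at h3
        have := Nat.le_of_dvd hmem.1 (orderOf_dvd_of_pow_eq_one h3)
        omega
    have hev : Even (orderOf y) := by
      by_contra hodd
      obtain ⟨v, w, h1, h2⟩ := odd_case hxy hp3 hsimple (Nat.not_even_iff_odd.mp hodd)
      exact hA v w h1 h2
    refine ⟨hA, hev, ?_⟩
    obtain ⟨j, hj1, hjq, hj⟩ := even_case hxy hp3 hsimple hrefl hden hev
    set H := Subgroup.closure {y, x * y⁻¹ * x} with hH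
    have hy : y ∈ H := Subgroup.subset_closure (by simp)
    have he : x * y⁻¹ * x ∈ H := Subgroup.subset_closure (by simp)
    have hx : x ∉ H := by
      intro hx
      have h1 := simple_key hxy hsimple (j : ℤ) (by simpa using hj x hx)
      rw [zpow_natCast] at h1
      have := Nat.le_of_dvd hj1 (orderOf_dvd_of_pow_eq_one h1)
      omega
    have hc := card_le hgen hxy hp3 H hy he
    have i2 := double_inj (g := x) (fun k => simple_key hxy hsimple k)
    have := Nat.card_le_card_of_injective _ (i2.sumElim (Subtype.val_injective (p := (· ∈ H))) (by
      rintro ⟨⟨a, i, rfl⟩, ⟨b, j, rfl⟩⟩ ⟨h, hh⟩ heq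
      simp only at heq
      apply hx
      have : x = y ^ (-i) * (y ^ i * x * y ^ j) * y ^ (-j) := by group
      rw [this, heq]
      exact mul_mem (mul_mem (zpow_mem hy _) hh) (zpow_mem hy _)))
    simp only [Nat.card_sum, Nat.card_prod, Nat.card_zpowers] at this
    have hc2 : orderOf y * orderOf y + Nat.card H ≤ Nat.card G := this
    nlinarith
  · by_contra hodd
    have := hEven (Nat.not_odd_iff_even.mp hodd)
    omega

end RegularMap
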